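/- Let 0 < α_π < α_ν and t > 0. For the linear schedule λ_s = s/t on [0,t], with α_v := (1 − v/t)α_ν + (v/t)α_π, the quantity G_t := (1/t) ∫_0^t exp( −2 ∫_s^t α_v dv ) ds satisfies the identity G_t = √(π / (4t(α_ν − α_π))) · [ erfcx( α_π √(t/(α_ν − α_π)) ) − e^{−(α_ν + α_π)t} · erfcx( α_ν √(t/(α_ν − α_π)) ) ], where erfcx(x) = e^{x²}(1 − erf(x)) and erf(z) = (2/√π) ∫_0^z e^{−x²} dx. -/

import Mathlib

open MeasureTheory Real intervalIntegral

/-- The error function erf(z) = (2/√π) ∫₀ᶻ e^{−x²} dx. -/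
noncomputable def erf (z : ℝ) : ℝ :=
  (2 / Real.sqrt Real.pi) * ∫ x in (0 : ℝ)..z, Real.exp (-x ^ 2)

/-- The complementary scaled error function erfcx(x) = e^{x²}(1 − erf(x)). -/
noncomputable def erfcx (x : ℝ) : ℝ := Real.exp (x ^ 2) * (1 - erf x)

/-!
In terms of the time to go `u = t - s`, the exponent `2 ∫ₛᵗ α_v dv` is the quadratic `m u² + 2 p u`
with `m = (α_ν - α_π) / t` and `p = α_π`. Since `erfcx' x = 2 x erfcx x - 2 / √π`, the function
`u ↦ exp (-(m u² + 2 p u)) * erfcx ((m u + p) / √m)` has derivative a constant multiple of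
`exp (-(m u² + 2 p u))`: the terms containing `erfcx` cancel. Its values at `u = 0` and `u = t`
are the two terms of the closed form.
-/

theorem hasDerivAt_erf (x : ℝ) : HasDerivAt erf (2 / √π * exp (-x ^ 2)) x := by
  have hcont : Continuous fun x : ℝ => exp (-x ^ 2) := by fun_prop
  exact (hcont.integral_hasStrictDerivAt 0 x).hasDerivAt.const_mul (2 / √π)

theorem hasDerivAt_erfcx (x : ℝ) : HasDerivAt erfcx (2 * x * erfcx x - 2 / √π) x := by
  have hexp : HasDerivAt (fun x : ℝ => exp (x ^ 2)) (exp (x ^ 2) * (2 * x)) x := by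
    simpa using (hasDerivAt_pow 2 x).exp
  refine (hexp.mul ((hasDerivAt_erf x).const_sub 1)).congr_deriv ?_
  have hinv : exp (x ^ 2) * exp (-x ^ 2) = 1 := by rw [← exp_add, add_neg_cancel, exp_zero]
  rw [erfcx]
  linear_combination (-(2 / √π)) * hinv

theorem hasDerivAt_exp_neg_quadratic_mul_erfcx {m : ℝ} (hm : 0 < m) (p u : ℝ) :
    HasDerivAt (fun u => exp (-(m * u ^ 2 + 2 * p * u)) * erfcx ((m * u + p) / √m))
      (-(2 * √m / √π) * exp (-(m * u ^ 2 + 2 * p * u))) u := by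
  have hquad : HasDerivAt (fun u => -(m * u ^ 2 + 2 * p * u)) (-(2 * (m * u + p))) u := by
    refine (((hasDerivAt_pow 2 u).const_mul m).add
      ((hasDerivAt_id' u).const_mul (2 * p))).neg.congr_deriv ?_
    push_cast
    ring
  have harg : HasDerivAt (fun u => (m * u + p) / √m) √m u := by
    simpa using (((hasDerivAt_id' u).const_mul m).add_const p).div_const √m
  refine (hquad.exp.mul ((hasDerivAt_erfcx _).comp u harg)).congr_deriv ?_
  have hcancel : √m * ((m * u + p) / √m) = m * u + p := mul_div_cancel₀ _ (sqrt_pos.2 hm).ne'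
  simp only [Function.comp_apply]
  linear_combination
    2 * exp (-(m * u ^ 2 + 2 * p * u)) * erfcx ((m * u + p) / √m) * hcancel

theorem integral_exp_neg_quadratic {m : ℝ} (hm : 0 < m) (p a b : ℝ) :
    ∫ u in a..b, exp (-(m * u ^ 2 + 2 * p * u)) =
      √(π / (4 * m)) * (exp (-(m * a ^ 2 + 2 * p * a)) * erfcx ((m * a + p) / √m) -
        exp (-(m * b ^ 2 + 2 * p * b)) * erfcx ((m * b + p) / √m)) := by
  have hftc := integral_eq_sub_of_hasDerivAt (a := a) (b := b)
    (fun u _ => hasDerivAt_exp_neg_quadratic_mul_erfcx hm p u)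
    (Continuous.intervalIntegrable (by fun_prop) _ _)
  rw [intervalIntegral.integral_const_mul] at hftc
  have hscale : √(π / (4 * m)) * (2 * √m / √π) = 1 := by
    have hsqrt_m : √m ≠ 0 := (sqrt_pos.2 hm).ne'
    have hsqrt_pi : √π ≠ 0 := (sqrt_pos.2 pi_pos).ne'
    have hsqrt_four : √(4 : ℝ) = 2 := by rw [sqrt_eq_iff_eq_sq] <;> norm_num
    rw [sqrt_div pi_pos.le, sqrt_mul (by norm_num : (0 : ℝ) ≤ 4), hsqrt_four]
    field_simp
  linear_combination (-√(π / (4 * m))) * hftc -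
    (∫ u in a..b, exp (-(m * u ^ 2 + 2 * p * u))) * hscale

theorem two_mul_integral_linear_interpolation {t : ℝ} (ht : t ≠ 0) (a b s : ℝ) :
    2 * ∫ v in s..t, ((1 - v / t) * a + (v / t) * b) =
      (a - b) / t * (t - s) ^ 2 + 2 * b * (t - s) := by
  have haffine (v : ℝ) : (1 - v / t) * a + (v / t) * b = a - (a - b) / t * v := by ring
  simp_rw [haffine]
  rw [integral_sub (by simp) (Continuous.intervalIntegrable (by fun_prop) _ _),
    intervalIntegral.integral_const_mul, intervalIntegral.integral_const, integral_id, smul_eq_mul]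
  field_simp
  ring

theorem linear_tempering_upper_bound_closed_form_general
    (anu api t : ℝ) (hord : api < anu) (ht : 0 < t) :
    (1 / t) * ∫ s in (0 : ℝ)..t,
        exp (-(2 * ∫ v in s..t, ((1 - v / t) * anu + (v / t) * api))) =
      √(π / (4 * t * (anu - api))) *
        (erfcx (api * √(t / (anu - api))) -
          exp (-((anu + api) * t)) * erfcx (anu * √(t / (anu - api)))) := by
  have hgap : 0 < anu - api := sub_pos.2 hord
  obtain ⟨m, hm_def⟩ : ∃ m, m = (anu - api) / t := ⟨_, rfl⟩
  have hm : 0 < m := hm_def ▸ div_pos hgap ht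
  have hmt : m * t = anu - api := by rw [hm_def, div_mul_cancel₀ _ ht.ne']
  have hprefactor : √(π / (4 * t * (anu - api))) = 1 / t * √(π / (4 * m)) := by
    rw [← hmt, show π / (4 * t * (m * t)) = (1 / t) ^ 2 * (π / (4 * m)) by field_simp,
      sqrt_mul (sq_nonneg _), sqrt_sq (by positivity)]
  have hscale : √(t / (anu - api)) = (√m)⁻¹ := by rw [hm_def, ← sqrt_inv, inv_div]
  have hinitial_rate : m * t + api = anu := by linear_combination hmt
  have hexponent : m * t ^ 2 + 2 * api * t = (anu + api) * t := by linear_combination t * hmt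
  simp_rw [two_mul_integral_linear_interpolation ht.ne', ← hm_def]
  rw [integral_comp_sub_left (fun u => exp (-(m * u ^ 2 + 2 * api * u))), sub_self, sub_zero,
    integral_exp_neg_quadratic hm, hprefactor, hscale, hinitial_rate, hexponent]
  simp [mul_assoc, div_eq_mul_inv]

/-- For 0 < α_π < α_ν, t > 0 and the linear schedule λ_s = s/t,
with α_v = (1 − v/t)α_ν + (v/t)α_π, the quantity
G_t = (1/t)∫₀ᵗ exp(−2∫ₛᵗ α_v dv) ds equals
√(π/(4t(α_ν−α_π)))·[erfcx(α_π√(t/(α_ν−α_π))) − e^{−(α_ν+α_π)t} erfcx(α_ν√(t/(α_ν−α_π)))]. -/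
theorem linear_tempering_upper_bound_closed_form
    (anu api t : ℝ) (hapi : 0 < api) (hord : api < anu) (ht : 0 < t) :
    (1 / t) * ∫ s in (0 : ℝ)..t,
        Real.exp (-(2 * ∫ v in s..t, ((1 - v / t) * anu + (v / t) * api)))
      = Real.sqrt (Real.pi / (4 * t * (anu - api)))
          * (erfcx (api * Real.sqrt (t / (anu - api)))
              - Real.exp (-((anu + api) * t)) * erfcx (anu * Real.sqrt (t / (anu - api)))) :=
  linear_tempering_upper_bound_closed_form_general anu api t hord ht
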